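/- arXiv:2503.01663 — 2 statements merged into one kernel-verified Lean document; each statement's English description precedes it below -/
import Mathlib

section
/- Let H = {1,…,m} and L = {1,…,n} be finite sets, let p = (p₁,…,p_m) ∈ [0,1]^m, and let F = (f₁,…,f_n) be an aligned tuple of nonnegative real-valued functions on the power set of H. Let ρ and ρ′ be partitions of L with ρ coarser than ρ′ (every block of ρ′ is contained in a block of ρ). Then ∏_{M ∈ ρ} E(∏_{l ∈ M} f_l, μ_p) ≥ ∏_{M′ ∈ ρ′} E(∏_{l ∈ M′} f_l, μ_p), where μ_p is the product Bernoulli measure on subsets of H. -/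
open Finset

/-- Product Bernoulli measure on subsets of `H = Fin m`. -/
def bern {m : ℕ} (p : Fin m → ℝ) (S : Finset (Fin m)) : ℝ :=
  (∏ h ∈ S, p h) * ∏ h ∈ Sᶜ, (1 - p h)

/-- Expectation with respect to the product Bernoulli measure. -/
def bernExp {m : ℕ} (p : Fin m → ℝ) (f : Finset (Fin m) → ℝ) : ℝ :=
  ∑ S : Finset (Fin m), f S * bern p S

def IncreasingAt {m : ℕ} (f : Finset (Fin m) → ℝ) (h : Fin m) : Prop :=
  ∀ S : Finset (Fin m), f S ≤ f (insert h S)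

def DecreasingAt {m : ℕ} (f : Finset (Fin m) → ℝ) (h : Fin m) : Prop :=
  ∀ S : Finset (Fin m), f (insert h S) ≤ f S

def Aligned {m n : ℕ} (F : Fin n → Finset (Fin m) → ℝ) : Prop :=
  ∀ h : Fin m, (∀ l, IncreasingAt (F l) h) ∨ (∀ l, DecreasingAt (F l) h)

theorem bern_eq_prod_ite {m : ℕ} (p : Fin m → ℝ) (S : Finset (Fin m)) :
    bern p S = ∏ h, if h ∈ S then p h else 1 - p h := by
  rw [bern, Finset.prod_ite]
  congr 2 <;> ext <;> simp

theorem bern_nonneg {m : ℕ} {p : Fin m → ℝ} (hp : ∀ h, 0 ≤ p h ∧ p h ≤ 1)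
    (S : Finset (Fin m)) : 0 ≤ bern p S :=
  mul_nonneg (prod_nonneg fun h _ => (hp h).1)
    (prod_nonneg fun h _ => sub_nonneg.2 (hp h).2)

theorem sum_bern {m : ℕ} (p : Fin m → ℝ) : ∑ S, bern p S = 1 := by
  have h := Finset.prod_add p (fun h => 1 - p h) univ
  simpa [bern, compl_eq_univ_sdiff] using h.symm

theorem bernExp_nonneg {m : ℕ} {p : Fin m → ℝ} (hp : ∀ h, 0 ≤ p h ∧ p h ≤ 1)
    {f : Finset (Fin m) → ℝ} (hf : 0 ≤ f) : 0 ≤ bernExp p f :=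
  sum_nonneg fun S _ => mul_nonneg (hf S) (bern_nonneg hp S)

theorem bern_symmDiff_mul {m : ℕ} (p : Fin m → ℝ) (D S T : Finset (Fin m)) :
    bern p (symmDiff S D) * bern p (symmDiff T D) =
      bern p (symmDiff (S ⊓ T) D) * bern p (symmDiff (S ⊔ T) D) := by
  simp only [bern_eq_prod_ite, ← prod_mul_distrib]
  refine prod_congr rfl fun h _ => ?_
  by_cases hS : h ∈ S <;> by_cases hT : h ∈ T <;> by_cases hD : h ∈ D <;>
    simp [mem_symmDiff, hS, hT, hD, mul_comm]

theorem sum_symmDiff_right {m : ℕ} (D : Finset (Fin m)) (f : Finset (Fin m) → ℝ) :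
    ∑ S, f (symmDiff S D) = ∑ S, f S :=
  Equiv.sum_comp (symmDiff_left_involutive D).toPerm f

/-- Harris' inequality for functions that become increasing after flipping the
coordinates in `D`. -/
theorem bernExp_mul_le {m : ℕ} {p : Fin m → ℝ} (hp : ∀ h, 0 ≤ p h ∧ p h ≤ 1)
    (D : Finset (Fin m)) {f g : Finset (Fin m) → ℝ} (hf : 0 ≤ f) (hg : 0 ≤ g)
    (hfD : Monotone fun S => f (symmDiff S D)) (hgD : Monotone fun S => g (symmDiff S D)) :
    bernExp p f * bernExp p g ≤ bernExp p (f * g) := by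
  have key := fkg (fun S => f (symmDiff S D)) (fun S => g (symmDiff S D))
    (fun S => bern p (symmDiff S D)) (fun S => bern_nonneg hp _)
    (fun S => hf (symmDiff S D)) (fun S => hg (symmDiff S D)) hfD hgD (fun S T => (bern_symmDiff_mul p D S T).le)
  rw [sum_symmDiff_right D (bern p), sum_bern, one_mul,
    sum_symmDiff_right D (fun S => bern p S * f S),
    sum_symmDiff_right D (fun S => bern p S * g S),
    sum_symmDiff_right D (fun S => bern p S * (f S * g S))] at key
  simpa only [bernExp, Pi.mul_apply, mul_comm (bern p _)] using key

theorem monotone_prod_of_nonneg {α ι : Type*} [Preorder α] {s : Finset ι} {g : ι → α → ℝ}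
    (hg : ∀ i ∈ s, 0 ≤ g i) (hmono : ∀ i ∈ s, Monotone (g i)) :
    Monotone fun a => ∏ i ∈ s, g i a :=
  fun a _ hab => prod_le_prod (fun i hi => hg i hi a) fun i hi => hmono i hi hab

theorem prod_bernExp_le {m : ℕ} {p : Fin m → ℝ} (hp : ∀ h, 0 ≤ p h ∧ p h ≤ 1)
    (D : Finset (Fin m)) {ι : Type*} (s : Finset ι) (g : ι → Finset (Fin m) → ℝ)
    (hg : ∀ i, 0 ≤ g i) (hmono : ∀ i, Monotone fun S => g i (symmDiff S D)) :
    ∏ i ∈ s, bernExp p (g i) ≤ bernExp p fun S => ∏ i ∈ s, g i S := by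
  classical
  induction s using Finset.induction_on with
  | empty => simp [bernExp, sum_bern]
  | insert a s ha ih =>
    simp only [prod_insert ha]
    exact (mul_le_mul_of_nonneg_left ih (bernExp_nonneg hp (hg a))).trans <|
      bernExp_mul_le hp D (hg a) (fun S => prod_nonneg fun i _ => hg i S) (hmono a)
        (monotone_prod_of_nonneg (fun i _ S => hg i (symmDiff S D)) fun i _ => hmono i)

theorem Aligned.exists_monotone_symmDiff {m n : ℕ} {F : Fin n → Finset (Fin m) → ℝ}
    (hF : Aligned F) :
    ∃ D : Finset (Fin m), ∀ l, Monotone fun S => F l (symmDiff S D) := by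
  classical
  refine ⟨univ.filter fun h => ¬ ∀ l, IncreasingAt (F l) h, fun l => ?_⟩
  set D := univ.filter fun h => ¬ ∀ l, IncreasingAt (F l) h with hD
  refine Finset.monotone_iff_forall_le_cons.2 fun S h hS => ?_
  rw [cons_eq_insert]
  by_cases hh : ∀ l, IncreasingAt (F l) h
  · have hhD : h ∉ D := by simpa [hD] using hh
    have heq : symmDiff (insert h S) D = insert h (symmDiff S D) := by
      ext x; by_cases hx : x = h <;> simp [mem_symmDiff, hx, hhD]
    simpa only [heq] using hh l _
  · have hhD : h ∈ D := by simpa [hD] using hh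
    have heq : symmDiff S D = insert h (symmDiff (insert h S) D) := by
      ext x; by_cases hx : x = h <;> simp [mem_symmDiff, hx, hhD, hS]
    simpa only [heq] using (hF h).resolve_left hh l (symmDiff (insert h S) D)

/-- For an aligned tuple of nonnegative functions, coarsening a partition of the index
set increases the product over blocks of the expectations of the block products. -/
theorem coarser_partition_blockProd_le {m n : ℕ}
    (p : Fin m → ℝ) (hp : ∀ h, 0 ≤ p h ∧ p h ≤ 1)
    (F : Fin n → Finset (Fin m) → ℝ)
    (hFnonneg : ∀ l S, 0 ≤ F l S) (hFaligned : Aligned F)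
    (ρ ρ' : Finpartition (univ : Finset (Fin n)))
    (hcoarser : ∀ M' ∈ ρ'.parts, ∃ M ∈ ρ.parts, M' ⊆ M) :
    ∏ M' ∈ ρ'.parts, bernExp p (fun S => ∏ l ∈ M', F l S) ≤
      ∏ M ∈ ρ.parts, bernExp p (fun S => ∏ l ∈ M, F l S) := by
  classical
  obtain ⟨D, hD⟩ := hFaligned.exists_monotone_symmDiff
  choose! c hc hsub using hcoarser
  rw [← prod_fiberwise_of_maps_to hc]
  refine prod_le_prod (fun M _ => prod_nonneg fun M' _ => bernExp_nonneg hp fun S =>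
    prod_nonneg fun l _ => hFnonneg l S) fun M hM => ?_
  have hunion : M = (ρ'.parts.filter fun M' => c M' = M).biUnion id := by
    ext x
    simp only [mem_biUnion, mem_filter, id]
    constructor
    · intro hx
      obtain ⟨M', hM', hxM'⟩ := ρ'.exists_mem (mem_univ x)
      exact ⟨M', ⟨hM', ρ.eq_of_mem_parts (hc M' hM') hM (hsub M' hM' hxM') hx⟩, hxM'⟩
    · rintro ⟨M', ⟨hM', rfl⟩, hx⟩
      exact hsub M' hM' hx
  have hprod (S : Finset (Fin m)) :
      ∏ l ∈ M, F l S = ∏ M' ∈ ρ'.parts with c M' = M, ∏ l ∈ M', F l S := by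
    conv_lhs => rw [hunion]
    exact prod_biUnion (ρ'.disjoint.subset (coe_subset.2 (filter_subset _ _)))
  simp only [hprod]
  exact prod_bernExp_le hp D _ (fun M' S => ∏ l ∈ M', F l S)
    (fun M' S => prod_nonneg fun l _ => hFnonneg l S)
    fun M' => monotone_prod_of_nonneg (fun l _ S => hFnonneg l _) fun l _ => hD l
end

section
/- Let H = {1,…,m} be a finite set of voters, L = {1,…,n} a finite set of elections, P a finite set of parties, and t : H → P an assignment of each voter to the party they always vote for. Fix a party s ∈ P, and for each election l ∈ L let f_l be a function from the power set of H to [0,1] (the probability that party s wins election l given the set of votes cast) such that f_l is increasing at every h with t(h) = s and decreasing at every h with t(h) ≠ s. Let p = (p₁,…,p_m) ∈ [0,1]^m be the voters' turnout probabilities, and let Π and Π′ be staggered polling schedules (tuples of partitions of L, one partition per voter) with Π′ coarser than Π. Then the probability that party s sweeps all n elections satisfies E(Π′,p,F) ≥ E(Π,p,F), where F = (f₁,…,f_n). -/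
open Finset

/-- Weight of a block `M` of a partition relative to a turnout set `S`. -/
def blockWeight {n : ℕ} (p : ℝ) (M S : Finset (Fin n)) : ℝ :=
  if M ⊆ S then p else if M ∩ S = ∅ then 1 - p else 0

/-- The measure `μ_{π,p}` on subsets of `L = Fin n`. -/
def partMeasure {n : ℕ} (pt : Finpartition (univ : Finset (Fin n))) (p : ℝ)
    (S : Finset (Fin n)) : ℝ :=
  ∏ M ∈ pt.parts, blockWeight p M S

/-- `L_h(T) = {l : (h,l) ∈ T}`. -/
def Lh {m n : ℕ} (h : Fin m) (T : Finset (Fin m × Fin n)) : Finset (Fin n) :=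
  univ.filter fun l => (h, l) ∈ T

/-- `H_l(T) = {h : (h,l) ∈ T}`. -/
def Hl {m n : ℕ} (l : Fin n) (T : Finset (Fin m × Fin n)) : Finset (Fin m) :=
  univ.filter fun h => (h, l) ∈ T

/-- The measure `μ_{Π,p}` on subsets of `H × L`. -/
def schedMeasure {m n : ℕ} (Sch : Fin m → Finpartition (univ : Finset (Fin n)))
    (p : Fin m → ℝ) (T : Finset (Fin m × Fin n)) : ℝ :=
  ∏ h, partMeasure (Sch h) (p h) (Lh h T)

/-- `E(Π, p, F)`. -/
def schedExp {m n : ℕ} (Sch : Fin m → Finpartition (univ : Finset (Fin n)))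
    (p : Fin m → ℝ) (F : Fin n → Finset (Fin m) → ℝ) : ℝ :=
  ∑ T : Finset (Fin m × Fin n), (∏ l, F l (Hl l T)) * schedMeasure Sch p T

/-- `Sch'` is coarser than `Sch`. -/
def Coarser {m n : ℕ} (Sch' Sch : Fin m → Finpartition (univ : Finset (Fin n))) : Prop :=
  ∀ h, ∀ M ∈ (Sch h).parts, ∃ M' ∈ (Sch' h).parts, M ⊆ M'

/-- A sum against a product weight is monotone in the weights if it is monotone in each of them
separately. -/
lemma sum_mul_prod_le_sum_mul_prod {β : Type*} [Fintype β] {m : ℕ} (w w' : Fin m → β → ℝ)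
    (hw : ∀ h x, 0 ≤ w h x) (hw' : ∀ h x, 0 ≤ w' h x) (Φ : (Fin m → β) → ℝ)
    (hΦ : ∀ h τ, ∑ x, Φ (Function.update τ h x) * w h x
      ≤ ∑ x, Φ (Function.update τ h x) * w' h x) :
    ∑ τ, Φ τ * ∏ h, w h (τ h) ≤ ∑ τ, Φ τ * ∏ h, w' h (τ h) := by
  induction m with
  | zero => simp
  | succ m ih =>
    have split (v : Fin (m + 1) → β → ℝ) : ∑ τ, Φ τ * ∏ h, v h (τ h)
        = ∑ x, ∑ τ : Fin m → β, Φ (Fin.cons x τ) * (v 0 x * ∏ h, v h.succ (τ h)) := by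
      rw [← (Fin.consEquiv fun _ : Fin (m + 1) => β).sum_comp, Fintype.sum_prod_type]
      simp [Fin.consEquiv, Fin.prod_univ_succ]
    rw [split, split]
    calc ∑ x, ∑ τ : Fin m → β, Φ (Fin.cons x τ) * (w 0 x * ∏ h, w h.succ (τ h))
        = ∑ x, w 0 x * ∑ τ : Fin m → β, Φ (Fin.cons x τ) * ∏ h, w h.succ (τ h) := by
          simp only [mul_sum]
          exact sum_congr rfl fun x _ => sum_congr rfl fun τ _ => by ring
      _ ≤ ∑ x, w 0 x * ∑ τ : Fin m → β, Φ (Fin.cons x τ) * ∏ h, w' h.succ (τ h) := by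
          refine sum_le_sum fun x _ => mul_le_mul_of_nonneg_left ?_ (hw 0 x)
          refine ih (fun h => w h.succ) (fun h => w' h.succ) (fun h => hw _) (fun h => hw' _)
            (fun τ => Φ (Fin.cons x τ)) fun h τ => ?_
          simpa only [Fin.cons_update] using hΦ h.succ (Fin.cons x τ)
      _ = ∑ τ : Fin m → β, (∏ h, w' h.succ (τ h)) * ∑ x, Φ (Fin.cons x τ) * w 0 x := by
          simp only [mul_sum]
          rw [sum_comm]
          exact sum_congr rfl fun x _ => sum_congr rfl fun τ _ => by ring
      _ ≤ ∑ τ : Fin m → β, (∏ h, w' h.succ (τ h)) * ∑ x, Φ (Fin.cons x τ) * w' 0 x := by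
          refine sum_le_sum fun τ _ =>
            mul_le_mul_of_nonneg_left ?_ (prod_nonneg fun h _ => hw' _ _)
          rcases isEmpty_or_nonempty β with hβ | ⟨⟨y⟩⟩
          · simp
          · simpa only [Fin.update_cons_zero] using hΦ 0 (Fin.cons y τ)
      _ = ∑ x, ∑ τ : Fin m → β, Φ (Fin.cons x τ) * (w' 0 x * ∏ h, w' h.succ (τ h)) := by
          simp only [mul_sum]
          rw [sum_comm]
          exact sum_congr rfl fun x _ => sum_congr rfl fun τ _ => by ring

/-- Chebyshev's inequality for products over a two-point probability space. -/
lemma prod_convexComb_le {ι : Type*} (Q : Finset ι) (a b : ι → ℝ) {p : ℝ} (hp0 : 0 ≤ p)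
    (hp1 : p ≤ 1) (ha : ∀ i ∈ Q, 0 ≤ a i) (hab : ∀ i ∈ Q, a i ≤ b i) :
    ∏ i ∈ Q, (p * b i + (1 - p) * a i) ≤ p * ∏ i ∈ Q, b i + (1 - p) * ∏ i ∈ Q, a i := by
  classical
  induction Q using Finset.induction_on with
  | empty => simp
  | insert i Q hi ih =>
    simp only [prod_insert hi]
    simp only [mem_insert, forall_eq_or_imp] at ha hab
    have hAB : ∏ i ∈ Q, a i ≤ ∏ i ∈ Q, b i := prod_le_prod ha.2 hab.2
    have hnn : 0 ≤ p * b i + (1 - p) * a i :=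
      add_nonneg (mul_nonneg hp0 (ha.1.trans hab.1)) (mul_nonneg (sub_nonneg.2 hp1) ha.1)
    have hcheb : 0 ≤ p * (1 - p) * ((b i - a i) * (∏ i ∈ Q, b i - ∏ i ∈ Q, a i)) :=
      mul_nonneg (mul_nonneg hp0 (sub_nonneg.2 hp1))
        (mul_nonneg (sub_nonneg.2 hab.1) (sub_nonneg.2 hAB))
    linarith [mul_le_mul_of_nonneg_left (ih ha.2 hab.2) hnn]

/-- On a union of blocks, the weight of a block is `p` or `1 - p`. -/
lemma blockWeight_biUnion {n : ℕ} (pt : Finpartition (univ : Finset (Fin n))) (p : ℝ)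
    {C : Finset (Finset (Fin n))} (hC : C ⊆ pt.parts) {M : Finset (Fin n)} (hM : M ∈ pt.parts) :
    blockWeight p M (C.biUnion id) = if M ∈ C then p else 1 - p := by
  unfold blockWeight
  by_cases h : M ∈ C
  · have hsub : M ⊆ C.biUnion id := subset_biUnion_of_mem id h
    rw [if_pos hsub, if_pos h]
  · have hdisj : Disjoint M (C.biUnion id) := by
      rw [disjoint_biUnion_right]
      exact fun N hN => pt.disjoint hM (hC hN) fun e => h (e ▸ hN)
    rw [if_neg h, if_neg, if_pos (disjoint_iff_inter_eq_empty.1 hdisj)]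
    exact fun hs => pt.ne_bot hM (hdisj.eq_bot_of_le hs)

/-- The integral of a product function against `partMeasure` is a product over the blocks. -/
lemma sum_prod_mul_partMeasure {n : ℕ} (pt : Finpartition (univ : Finset (Fin n))) (p : ℝ)
    (a b : Fin n → ℝ) :
    ∑ S : Finset (Fin n), (∏ l, if l ∈ S then b l else a l) * partMeasure pt p S
      = ∏ M ∈ pt.parts, (p * ∏ l ∈ M, b l + (1 - p) * ∏ l ∈ M, a l) := by
  rw [prod_add]
  symm
  refine sum_of_injOn (fun C => C.biUnion id) ?_ (fun _ _ => mem_coe.2 (mem_univ _)) ?_ ?_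
  · intro C hC D hD hCD
    rw [mem_coe, mem_powerset] at hC hD
    have key : ∀ {C D : Finset (Finset (Fin n))}, C ⊆ pt.parts → D ⊆ pt.parts →
        C.biUnion id = D.biUnion id → C ⊆ D := by
      intro C D hC hD hCD M hM
      obtain ⟨l, hl⟩ := pt.nonempty_of_mem_parts (hC hM)
      have : l ∈ D.biUnion id := hCD ▸ mem_biUnion.2 ⟨M, hM, hl⟩
      obtain ⟨N, hN, hlN⟩ := mem_biUnion.1 this
      rwa [pt.eq_of_mem_parts (hC hM) (hD hN) hl hlN]
    exact (key hC hD hCD).antisymm (key hD hC hCD.symm)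
  · intro S _ hS
    by_contra hne
    have hw : ∀ M ∈ pt.parts, blockWeight p M S ≠ 0 :=
      prod_ne_zero_iff.1 (right_ne_zero_of_mul hne)
    refine hS ⟨pt.parts.filter (· ⊆ S), mem_coe.2 (mem_powerset.2 (filter_subset _ _)), ?_⟩
    ext l
    simp only [mem_biUnion, mem_filter, id]
    refine ⟨fun ⟨M, hM, hl⟩ => hM.2 hl, fun hl => ?_⟩
    obtain ⟨M, hM, hlM⟩ := pt.exists_mem (mem_univ l)
    refine ⟨M, ⟨hM, ?_⟩, hlM⟩
    by_contra hMS
    refine hw M hM ?_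
    rw [blockWeight, if_neg hMS, if_neg]
    exact ne_empty_of_mem (mem_inter.2 ⟨hlM, hl⟩)
  · intro C hC
    rw [mem_powerset] at hC
    have hmem : ∀ M ∈ pt.parts, ∀ l ∈ M, l ∈ C.biUnion id ↔ M ∈ C := by
      intro M hM l hl
      refine ⟨fun h => ?_, fun h => mem_biUnion.2 ⟨M, h, hl⟩⟩
      obtain ⟨N, hN, hlN⟩ := mem_biUnion.1 h
      rwa [pt.eq_of_mem_parts hM (hC hN) hl hlN]
    have hprod : (∏ l, if l ∈ C.biUnion id then b l else a l)
        = ∏ M ∈ pt.parts, ∏ l ∈ M, if l ∈ C.biUnion id then b l else a l := by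
      conv_lhs => rw [← pt.biUnion_parts]
      exact prod_biUnion pt.disjoint
    rw [hprod, partMeasure, ← prod_mul_distrib, ← prod_sdiff hC, mul_comm]
    refine congr_arg₂ _ (prod_congr rfl fun M hM => ?_) (prod_congr rfl fun M hM => ?_)
    · obtain ⟨hM, hMC⟩ := mem_sdiff.1 hM
      rw [blockWeight_biUnion pt p hC hM, if_neg hMC, mul_comm]
      refine congr_arg (· * _) (prod_congr rfl fun l hl => ?_)
      rw [if_neg (mt (hmem M hM l hl).1 hMC)]
    · rw [blockWeight_biUnion pt p hC (hC hM), if_pos hM, mul_comm]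
      refine congr_arg (· * _) (prod_congr rfl fun l hl => ?_)
      rw [if_pos ((hmem M (hC hM) l hl).2 hM)]

lemma prod_parts_le_of_coarser {n : ℕ} {pt pt' : Finpartition (univ : Finset (Fin n))}
    (hpt : ∀ M ∈ pt.parts, ∃ M' ∈ pt'.parts, M ⊆ M') {p : ℝ} (hp0 : 0 ≤ p) (hp1 : p ≤ 1)
    {a b : Fin n → ℝ} (ha : ∀ l, 0 ≤ a l) (hab : ∀ l, a l ≤ b l) :
    ∏ M ∈ pt.parts, (p * ∏ l ∈ M, b l + (1 - p) * ∏ l ∈ M, a l)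
      ≤ ∏ M ∈ pt'.parts, (p * ∏ l ∈ M, b l + (1 - p) * ∏ l ∈ M, a l) := by
  have hparts : pt.parts = pt'.parts.biUnion fun M' => pt.parts.filter (· ⊆ M') := by
    ext M
    simp only [mem_biUnion, mem_filter]
    exact ⟨fun hM => (hpt M hM).imp fun M' h => ⟨h.1, hM, h.2⟩, fun ⟨_, _, hM, _⟩ => hM⟩
  have hdisj : (pt'.parts : Set (Finset (Fin n))).PairwiseDisjoint
      fun M' => pt.parts.filter (· ⊆ M') := by
    intro M' hM' N' hN' hne
    rw [Function.onFun, disjoint_left]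
    intro M hM hN
    obtain ⟨hM, hMM'⟩ := mem_filter.1 hM
    obtain ⟨l, hl⟩ := pt.nonempty_of_mem_parts hM
    exact hne (pt'.eq_of_mem_parts hM' hN' (hMM' hl) ((mem_filter.1 hN).2 hl))
  have hunion : ∀ M' ∈ pt'.parts, M' = (pt.parts.filter (· ⊆ M')).biUnion id := by
    intro M' hM'
    ext l
    simp only [mem_biUnion, mem_filter, id]
    refine ⟨fun hl => ?_, fun ⟨M, hM, hl⟩ => hM.2 hl⟩
    obtain ⟨M, hM, hlM⟩ := pt.exists_mem (mem_univ l)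
    obtain ⟨N', hN', hMN'⟩ := hpt M hM
    obtain rfl := pt'.eq_of_mem_parts hM' hN' hl (hMN' hlM)
    exact ⟨M, ⟨hM, hMN'⟩, hlM⟩
  have hb : ∀ l, 0 ≤ b l := fun l => (ha l).trans (hab l)
  conv_lhs => rw [hparts]
  rw [prod_biUnion hdisj]
  refine prod_le_prod (fun M' _ => prod_nonneg fun M _ => ?_) fun M' hM' => ?_
  · exact add_nonneg (mul_nonneg hp0 (prod_nonneg fun l _ => hb l))
      (mul_nonneg (sub_nonneg.2 hp1) (prod_nonneg fun l _ => ha l))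
  · have hsplit (c : Fin n → ℝ) :
        ∏ l ∈ M', c l = ∏ M ∈ pt.parts.filter (· ⊆ M'), ∏ l ∈ M, c l := by
      conv_lhs => rw [hunion M' hM']
      exact prod_biUnion (pt.disjoint.subset (coe_subset.2 (filter_subset _ _)))
    rw [hsplit a, hsplit b]
    exact prod_convexComb_le _ _ _ hp0 hp1 (fun M _ => prod_nonneg fun l _ => ha l)
      fun M _ => prod_le_prod (fun l _ => ha l) fun l _ => hab l

lemma sum_prod_mul_partMeasure_le_of_coarser {n : ℕ}
    {pt pt' : Finpartition (univ : Finset (Fin n))}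
    (hpt : ∀ M ∈ pt.parts, ∃ M' ∈ pt'.parts, M ⊆ M') {p : ℝ} (hp0 : 0 ≤ p) (hp1 : p ≤ 1)
    {a b : Fin n → ℝ} (ha : ∀ l, 0 ≤ a l) (hb : ∀ l, 0 ≤ b l)
    (hab : (∀ l, a l ≤ b l) ∨ ∀ l, b l ≤ a l) :
    ∑ S : Finset (Fin n), (∏ l, if l ∈ S then b l else a l) * partMeasure pt p S
      ≤ ∑ S : Finset (Fin n), (∏ l, if l ∈ S then b l else a l) * partMeasure pt' p S := by
  rw [sum_prod_mul_partMeasure, sum_prod_mul_partMeasure]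
  rcases hab with hab | hab
  · exact prod_parts_le_of_coarser hpt hp0 hp1 ha hab
  · simpa only [sub_sub_cancel, add_comm] using
      prod_parts_le_of_coarser hpt (sub_nonneg.2 hp1) (sub_le_self 1 hp0) hb hab

lemma partMeasure_nonneg {n : ℕ} (pt : Finpartition (univ : Finset (Fin n))) {p : ℝ}
    (hp0 : 0 ≤ p) (hp1 : p ≤ 1) (S : Finset (Fin n)) : 0 ≤ partMeasure pt p S := by
  refine prod_nonneg fun M _ => ?_
  unfold blockWeight
  split_ifs
  exacts [hp0, sub_nonneg.2 hp1, le_rfl]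

/-- `schedExp` as a sum over the tuples of turnout sets of the individual voters. -/
lemma schedExp_eq_sum_pi {m n : ℕ} (Sch : Fin m → Finpartition (univ : Finset (Fin n)))
    (p : Fin m → ℝ) (F : Fin n → Finset (Fin m) → ℝ) :
    schedExp Sch p F = ∑ τ : Fin m → Finset (Fin n),
      (∏ l, F l (univ.filter fun h => l ∈ τ h)) * ∏ h, partMeasure (Sch h) (p h) (τ h) := by
  unfold schedExp
  refine sum_nbij' (fun T h => Lh h T) (fun τ => univ.filter fun x => x.2 ∈ τ x.1)
    (fun _ _ => mem_univ _) (fun _ _ => mem_univ _) ?_ ?_ ?_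
  · intro T _
    ext x
    simp [Lh]
  · intro τ _
    ext h l
    simp [Lh]
  · intro T _
    simp [Lh, Hl, schedMeasure]

/-- Theorem C for a fixed party `s`: if each voter always votes for their own party,
each win-probability function `F l` is increasing at supporters of `s` and decreasing
at supporters of rival parties, then a coarser staggered polling schedule increases the
probability that party `s` sweeps all the elections. -/
theorem sweep_prob_coarser_schedule_le {m n : ℕ} {P : Type*} [Fintype P]
    (t : Fin m → P) (s : P)
    (F : Fin n → Finset (Fin m) → ℝ)
    (hF01 : ∀ l S, 0 ≤ F l S ∧ F l S ≤ 1)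
    (hInc : ∀ l (h : Fin m), t h = s → IncreasingAt (F l) h)
    (hDec : ∀ l (h : Fin m), t h ≠ s → DecreasingAt (F l) h)
    (p : Fin m → ℝ) (hp : ∀ h, 0 ≤ p h ∧ p h ≤ 1)
    (Sch Sch' : Fin m → Finpartition (univ : Finset (Fin n)))
    (hcoarser : Coarser Sch' Sch) :
    schedExp Sch p F ≤ schedExp Sch' p F := by
  rw [schedExp_eq_sum_pi, schedExp_eq_sum_pi]
  refine sum_mul_prod_le_sum_mul_prod _ _
    (fun h => partMeasure_nonneg _ (hp h).1 (hp h).2)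
    (fun h => partMeasure_nonneg _ (hp h).1 (hp h).2) _ fun h τ => ?_
  have hupdate (S : Finset (Fin n)) (l : Fin n) :
      F l (univ.filter fun k => l ∈ Function.update τ h S k)
        = if l ∈ S then F l (insert h ((univ.filter fun k => l ∈ τ k).erase h))
          else F l ((univ.filter fun k => l ∈ τ k).erase h) := by
    rw [← apply_ite (F l)]
    congr 1
    ext k
    by_cases hk : k = h
    · subst hk
      split_ifs with hl <;> simp [hl]
    · split_ifs with hl <;> simp [hk]
  simp only [hupdate]
  refine sum_prod_mul_partMeasure_le_of_coarser (hcoarser h) (hp h).1 (hp h).2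
    (fun l => (hF01 l _).1) (fun l => (hF01 l _).1) ?_
  by_cases ht : t h = s
  · exact Or.inl fun l => hInc l h ht _
  · exact Or.inr fun l => hDec l h ht _
end
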